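/- Let (X, 𝒜) be a measurable space, let p be the uniform probability measure on Bool (p({true}) = 1/2), and let κ be a Markov kernel from Bool to X with κ(true) = μ and κ(false) = ν, two mutually absolutely continuous probability measures. Let m = (1/2)•μ + (1/2)•ν. Then KL(p ⊗ₘ κ ‖ p × m) ≤ (1/4)·(KL(μ ‖ ν) + KL(ν ‖ μ)), where KL denotes the Kullback–Leibler divergence (valued in [0, ∞]). -/

import Mathlib

open MeasureTheory ProbabilityTheory
open scoped ENNReal ProbabilityTheory Classical

/-- The Kullback–Leibler divergence, valued in `[0, ∞]`: it is
`∫ log (dμ/dν) dμ` when `μ ≪ ν` and the log-likelihood ratio is integrable,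
and `∞` otherwise. -/
noncomputable def klDiv {X : Type*} [MeasurableSpace X] (μ ν : Measure X) : ℝ≥0∞ :=
  if μ ≪ ν ∧ Integrable (llr μ ν) μ then ENNReal.ofReal (∫ x, llr μ ν x ∂μ) else ⊤


lemma klDiv_eq_it {X : Type*} [MeasurableSpace X] (μ ν : Measure X)
    [IsProbabilityMeasure μ] [IsProbabilityMeasure ν] :
    klDiv μ ν = InformationTheory.klDiv μ ν := by
  simp [klDiv, InformationTheory.klDiv_def]

lemma kl_pointwise {a b f : ℝ} (hb : 0 ≤ b) (hf : 0 ≤ f) (h : f * b = a) (hab : a + b = 2) :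
    InformationTheory.klFun a ≤ 1 / 2 * (b * InformationTheory.klFun f) := by
  have hb0 : 0 < b := by
    rcases hb.eq_or_lt with h0 | h0
    · subst h0; simp at h; linarith
    · exact h0
  rcases hf.eq_or_lt with h0 | h0
  · subst h0
    have : a = 0 := by linarith
    subst this
    simp [InformationTheory.klFun_zero]; linarith
  have ha : 0 < a := h ▸ mul_pos h0 hb0
  have hlf : Real.log f = Real.log a - Real.log b := by
    rw [← h, Real.log_mul h0.ne' hb0.ne']; ring
  have hl : Real.log a + Real.log b ≤ 0 := by
    rw [← Real.log_mul ha.ne' hb0.ne']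
    exact Real.log_nonpos (by positivity) (by nlinarith [sq_nonneg (a - b)])
  have e : b * InformationTheory.klFun f = a * (Real.log a - Real.log b) + b - a := by
    rw [InformationTheory.klFun_apply, hlf, ← h]; ring
  rw [e, InformationTheory.klFun_apply]
  nlinarith [mul_nonneg ha.le (neg_nonneg.2 hl)]

lemma kl_half {X : Type*} [MeasurableSpace X] (μ ν m : Measure X)
    [IsProbabilityMeasure μ] [IsProbabilityMeasure ν] [IsProbabilityMeasure m]
    (hμν : μ ≪ ν) (hm : m = (1 / 2 : ℝ≥0∞) • μ + (1 / 2 : ℝ≥0∞) • ν)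
    (hνm : ν ≪ m) :
    InformationTheory.klDiv μ m ≤ (1 / 2 : ℝ≥0∞) * InformationTheory.klDiv μ ν := by
  rw [InformationTheory.klDiv_eq_lintegral_klFun_of_ac (hμν.trans hνm),
    InformationTheory.klDiv_eq_lintegral_klFun_of_ac hμν,
    ← lintegral_rnDeriv_mul hνm (by fun_prop), ← lintegral_const_mul _ (by fun_prop)]
  have h1 : m.rnDeriv m =ᵐ[m] fun _ => 1 := Measure.rnDeriv_self m
  have h2 : m.rnDeriv m =ᵐ[m] ((1 / 2 : ℝ≥0∞) • μ).rnDeriv m + ((1 / 2 : ℝ≥0∞) • ν).rnDeriv m := by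
    have : IsFiniteMeasure ((1 / 2 : ℝ≥0∞) • μ) := Measure.smul_finite _ (by simp)
    have : IsFiniteMeasure ((1 / 2 : ℝ≥0∞) • ν) := Measure.smul_finite _ (by simp)
    have := Measure.rnDeriv_add' ((1 / 2 : ℝ≥0∞) • μ) ((1 / 2 : ℝ≥0∞) • ν) m
    rwa [← hm] at this
  have h3 := Measure.rnDeriv_smul_left_of_ne_top' μ m (r := 1 / 2) (by simp)
  have h4 := Measure.rnDeriv_smul_left_of_ne_top' ν m (r := 1 / 2) (by simp)
  have h5 := Measure.rnDeriv_mul_rnDeriv (κ := m) hμν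
  refine lintegral_mono_ae ?_
  filter_upwards [h1, h2, h3, h4, h5, Measure.rnDeriv_lt_top μ m, Measure.rnDeriv_lt_top ν m]
    with x h1 h2 h3 h4 h5 h6 h7
  have hsum : (μ.rnDeriv m x).toReal + (ν.rnDeriv m x).toReal = 2 := by
    rw [h1, Pi.add_apply, h3, h4] at h2
    simp only [Pi.smul_apply, smul_eq_mul] at h2
    have := congrArg ENNReal.toReal h2
    rw [ENNReal.toReal_add (ENNReal.mul_ne_top (by simp) h6.ne)
      (ENNReal.mul_ne_top (by simp) h7.ne)] at this
    simp at this
    linarith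
  have hmul := congrArg ENNReal.toReal h5
  simp only [Pi.mul_apply, ENNReal.toReal_mul] at hmul
  have := ENNReal.ofReal_le_ofReal
    (kl_pointwise ENNReal.toReal_nonneg ENNReal.toReal_nonneg hmul hsum)
  refine this.trans_eq ?_
  rw [ENNReal.ofReal_mul (by norm_num), ENNReal.ofReal_mul ENNReal.toReal_nonneg,
    ENNReal.ofReal_toReal h7.ne]
  congr 1
  simp

/-- With `C` uniform on `Bool` and `X | C = true ~ μ`, `X | C = false ~ ν` mutually
absolutely continuous probability measures, and `m = (1/2) μ + (1/2) ν` the marginal,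
the mutual information `KL(p ⊗ₘ κ ‖ p × m)` is at most
`(1/4) (KL(μ ‖ ν) + KL(ν ‖ μ))`. -/
theorem fade_stmt8 {X : Type*} [MeasurableSpace X]
    (p : Measure Bool) [IsProbabilityMeasure p] (hp : p {true} = 1 / 2)
    (μ ν : Measure X) [IsProbabilityMeasure μ] [IsProbabilityMeasure ν]
    (hμν : μ ≪ ν) (hνμ : ν ≪ μ)
    (κ : Kernel Bool X) [IsMarkovKernel κ] (ht : κ true = μ) (hf : κ false = ν) :
    klDiv (p ⊗ₘ κ) (p.prod ((1 / 2 : ℝ≥0∞) • μ + (1 / 2 : ℝ≥0∞) • ν))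
      ≤ (1 / 4 : ℝ≥0∞) * (klDiv μ ν + klDiv ν μ) := by
  have hpf : p {false} = 1 / 2 := by
    have h : p {true}ᶜ = 1 - p {true} := prob_compl_eq_one_sub (measurableSet_singleton _)
    have e : ({true}ᶜ : Set Bool) = {false} := by ext b; cases b <;> simp
    rw [e, hp] at h
    rw [h]; simp
  have hlin : ∀ F : Bool → ℝ≥0∞, ∫⁻ b, F b ∂p = F true * (1 / 2) + F false * (1 / 2) := by
    intro F
    rw [lintegral_fintype]
    simp [hp, hpf]
  set m : Measure X := (1 / 2 : ℝ≥0∞) • μ + (1 / 2 : ℝ≥0∞) • ν with hm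
  have : IsProbabilityMeasure m := ⟨by simp [hm, ENNReal.inv_two_add_inv_two]⟩
  have hμm : μ ≪ m := by
    intro s hs
    simpa [hm] using (show m s = 0 from hs) |> fun h => by
      simp [hm] at h; exact h.1
  have hνm : ν ≪ m := hνμ.trans hμm
  set g : Bool × X → ℝ≥0∞ := fun z => (κ z.1).rnDeriv m z.2 with hg
  have hgm : Measurable g := by
    refine measurable_from_prod_countable_right fun b => ?_
    exact Measure.measurable_rnDeriv (κ b) m
  have hκ : ∀ b, κ b ≪ m := by
    intro b; cases b
    · rw [hf]; exact hνm
    · rw [ht]; exact hμm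
  have hjoint : p ⊗ₘ κ = (p.prod m).withDensity g := by
    ext s hs
    rw [Measure.compProd_apply hs, withDensity_apply _ hs, ← lintegral_indicator hs,
      lintegral_prod _ (hgm.indicator hs).aemeasurable]
    refine lintegral_congr fun b => ?_
    conv_lhs => rw [← Measure.withDensity_rnDeriv_eq _ _ (hκ b)]
    rw [withDensity_apply _ (measurable_prodMk_left hs),
      ← lintegral_indicator (measurable_prodMk_left hs)]
    rfl
  have hac : p ⊗ₘ κ ≪ p.prod m := hjoint ▸ withDensity_absolutelyContinuous _ _
  have hrn : (p ⊗ₘ κ).rnDeriv (p.prod m) =ᵐ[p.prod m] g := by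
    rw [hjoint]; exact Measure.rnDeriv_withDensity _ hgm
  have key : InformationTheory.klDiv (p ⊗ₘ κ) (p.prod m)
      = InformationTheory.klDiv μ m * (1 / 2) + InformationTheory.klDiv ν m * (1 / 2) := by
    rw [InformationTheory.klDiv_eq_lintegral_klFun_of_ac hac,
      InformationTheory.klDiv_eq_lintegral_klFun_of_ac hμm,
      InformationTheory.klDiv_eq_lintegral_klFun_of_ac hνm,
      lintegral_congr_ae (g := fun z => ENNReal.ofReal (InformationTheory.klFun (g z).toReal))
        (by filter_upwards [hrn] with z hz; rw [hz]),
      lintegral_prod _ (by fun_prop), hlin]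
    simp only [hg, ht, hf]
  rw [klDiv_eq_it, klDiv_eq_it, klDiv_eq_it, key]
  have k1 := kl_half μ ν m hμν hm hνm
  have k2 := kl_half ν μ m hνμ (hm.trans (add_comm _ _)) hμm
  have e4 : (1 / 4 : ℝ≥0∞) = 1 / 2 * (1 / 2) := by
    simp only [one_div]
    rw [← ENNReal.mul_inv (by simp) (by simp)]; norm_num
  calc _ ≤ (1 / 2 : ℝ≥0∞) * InformationTheory.klDiv μ ν * (1 / 2)
        + (1 / 2 : ℝ≥0∞) * InformationTheory.klDiv ν μ * (1 / 2) := by gcongr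
    _ = _ := by rw [e4]; ring
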